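/- arXiv:1303.3754 — 3 statements merged into one kernel-verified Lean document; each statement's English description precedes it below -/
import Mathlib

section
/- For every t ≥ 1, with ŷ_t = x_tᵀ D_t^{-1} (I + c^{-1}·D_{t-1})^{-1} e_{t-1} the LASER prediction, the per-step inequality (y_t − ŷ_t)² + (−e_{t-1}ᵀ D_{t-1}^{-1} e_{t-1} + f_{t-1}) − (−e_tᵀ D_t^{-1} e_t + f_t) ≤ y_t² · x_tᵀ D_t^{-1} x_t holds. -/
open Matrix Finset

/-- `D₀ = (bc/(c−b)) I`, `D_t = (D_{t-1}⁻¹ + c⁻¹ I)⁻¹ + x_t x_tᵀ` for `t ≥ 1`. -/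
noncomputable def Dmat (d : ℕ) (b c : ℝ) (x : ℕ → Fin d → ℝ) :
    ℕ → Matrix (Fin d) (Fin d) ℝ
  | 0 => (b * c / (c - b)) • 1
  | (t + 1) => ((Dmat d b c x t)⁻¹ + c⁻¹ • 1)⁻¹ + vecMulVec (x (t + 1)) (x (t + 1))

/-- `e₀ = 0`, `e_t = (I + c⁻¹ D_{t-1})⁻¹ e_{t-1} + y_t x_t` for `t ≥ 1`. -/
noncomputable def evec (d : ℕ) (b c : ℝ) (x : ℕ → Fin d → ℝ) (y : ℕ → ℝ) :
    ℕ → Fin d → ℝ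
  | 0 => 0
  | (t + 1) => (1 + c⁻¹ • Dmat d b c x t)⁻¹ *ᵥ evec d b c x y t + y (t + 1) • x (t + 1)

/-- LASER prediction at round `t + 1`:
`ŷ_{t+1} = x_{t+1}ᵀ D_{t+1}⁻¹ (I + c⁻¹ D_t)⁻¹ e_t`. -/
noncomputable def laserPred (d : ℕ) (b c : ℝ) (x : ℕ → Fin d → ℝ) (y : ℕ → ℝ)
    (t : ℕ) : ℝ :=
  x (t + 1) ⬝ᵥ ((Dmat d b c x (t + 1))⁻¹ *ᵥ
    ((1 + c⁻¹ • Dmat d b c x t)⁻¹ *ᵥ evec d b c x y t))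

/-- Cumulative squared loss of LASER over `T` rounds. -/
noncomputable def laserLoss (d : ℕ) (b c : ℝ) (x : ℕ → Fin d → ℝ) (y : ℕ → ℝ)
    (T : ℕ) : ℝ :=
  ∑ t ∈ Finset.range T, (y (t + 1) - laserPred d b c x y t) ^ 2

/-- `f₀ = 0`, `f_t = f_{t-1} − e_{t-1}ᵀ (c I + D_{t-1})⁻¹ e_{t-1} + y_t²` for `t ≥ 1`. -/
noncomputable def fsc (d : ℕ) (b c : ℝ) (x : ℕ → Fin d → ℝ) (y : ℕ → ℝ) : ℕ → ℝ
  | 0 => 0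
  | (t + 1) => fsc d b c x y t
      - evec d b c x y t ⬝ᵥ ((c • (1 : Matrix (Fin d) (Fin d) ℝ)
          + Dmat d b c x t)⁻¹ *ᵥ evec d b c x y t)
      + (y (t + 1)) ^ 2

/-!
Each round splits into two exact identities. Write `A = (D_{t-1}⁻¹ + c⁻¹ I)⁻¹` and
`u = (I + c⁻¹ D_{t-1})⁻¹ e_{t-1}` for the state after the drift, before `(x_t, y_t)` is seen.
The drift turns `e_{t-1}ᵀ D_{t-1}⁻¹ e_{t-1}` into `uᵀ A⁻¹ u`, the difference being exactly the
quadratic term subtracted in `f_t`. The observation is the rank-one update `D_t = A + x_t x_tᵀ`,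
for which Sherman–Morrison gives `uᵀ A⁻¹ u - uᵀ D_t⁻¹ u = ŷ_t² (1 + x_tᵀ A⁻¹ x_t)`. The two sides
of the claimed inequality therefore differ by exactly `ŷ_t² · x_tᵀ A⁻¹ x_t ≥ 0`.
-/

section CommSemiring

variable {n R : Type*} [Fintype n] [CommSemiring R]

theorem dotProduct_mulVec_comm_of_isSymm {A : Matrix n n R} (hA : A.IsSymm) (u v : n → R) :
    u ⬝ᵥ (A *ᵥ v) = v ⬝ᵥ (A *ᵥ u) := by
  rw [← dotProduct_transpose_mulVec, hA.eq]

theorem dotProduct_mulVec_add_smul_self {B : Matrix n n R} (hB : B.IsSymm) (u z : n → R) (r : R) :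
    (u + r • z) ⬝ᵥ (B *ᵥ (u + r • z)) =
      u ⬝ᵥ (B *ᵥ u) + 2 * r * (z ⬝ᵥ (B *ᵥ u)) + r ^ 2 * (z ⬝ᵥ (B *ᵥ z)) := by
  simp only [mulVec_add, mulVec_smul, add_dotProduct, dotProduct_add, smul_dotProduct,
    dotProduct_smul, smul_eq_mul, dotProduct_mulVec_comm_of_isSymm hB u z]
  ring

end CommSemiring

section CommRing

variable {n R : Type*} [Fintype n] [DecidableEq n] [CommRing R]

section Drift

variable {C D : Matrix n n R}

theorem add_mul_inv_eq_one_add_mul_inv (hC : IsUnit C) : (C + D) * C⁻¹ = 1 + D * C⁻¹ := by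
  rw [add_mul, mul_nonsing_inv _ ((isUnit_iff_isUnit_det _).1 hC)]

theorem inv_sub_inv_add_eq_inv_mul_inv (hC : IsUnit C) (hD : IsUnit D) (hCD : IsUnit (C + D)) :
    D⁻¹ - (C + D)⁻¹ = D⁻¹ * (1 + D * C⁻¹)⁻¹ := by
  rw [inv_sub_inv (iff_of_true hD hCD), add_sub_cancel_right, mul_assoc,
    ← add_mul_inv_eq_one_add_mul_inv hC, Matrix.mul_inv_rev,
    nonsing_inv_nonsing_inv _ ((isUnit_iff_isUnit_det _).1 hC)]

theorem inv_add_inv_mul_inv_one_add_mul_inv (hC : IsUnit C) (hD : IsUnit D)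
    (hCD : IsUnit (C + D)) : (D⁻¹ + C⁻¹) * (1 + D * C⁻¹)⁻¹ = D⁻¹ := by
  have hunit : IsUnit (1 + D * C⁻¹) :=
    add_mul_inv_eq_one_add_mul_inv hC ▸ hCD.mul (isUnit_nonsing_inv_iff.2 hC)
  have hfactor : D⁻¹ + C⁻¹ = D⁻¹ * (1 + D * C⁻¹) := by
    rw [mul_add, mul_one, nonsing_inv_mul_cancel_left _ _ ((isUnit_iff_isUnit_det _).1 hD)]
  rw [hfactor, mul_nonsing_inv_cancel_right _ _ ((isUnit_iff_isUnit_det _).1 hunit)]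

theorem dotProduct_inv_mulVec_sub_dotProduct_inv_add_mulVec (hD_symm : D.IsSymm)
    (hC : IsUnit C) (hD : IsUnit D) (hCD : IsUnit (C + D)) (e : n → R) :
    e ⬝ᵥ (D⁻¹ *ᵥ e) - e ⬝ᵥ ((C + D)⁻¹ *ᵥ e) =
      ((1 + D * C⁻¹)⁻¹ *ᵥ e) ⬝ᵥ ((D⁻¹ + C⁻¹) *ᵥ ((1 + D * C⁻¹)⁻¹ *ᵥ e)) := by
  calc e ⬝ᵥ (D⁻¹ *ᵥ e) - e ⬝ᵥ ((C + D)⁻¹ *ᵥ e)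
      = e ⬝ᵥ (D⁻¹ *ᵥ ((1 + D * C⁻¹)⁻¹ *ᵥ e)) := by
        rw [← dotProduct_sub, ← sub_mulVec, inv_sub_inv_add_eq_inv_mul_inv hC hD hCD,
          mulVec_mulVec]
    _ = ((1 + D * C⁻¹)⁻¹ *ᵥ e) ⬝ᵥ (D⁻¹ *ᵥ e) := dotProduct_mulVec_comm_of_isSymm hD_symm.inv _ _
    _ = _ := by rw [mulVec_mulVec, inv_add_inv_mul_inv_one_add_mul_inv hC hD hCD]

end Drift

section RankOne

variable {A : Matrix n n R} {z w : n → R}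

theorem inv_mulVec_eq_inv_rankOneUpdate_mulVec_add (hA : IsUnit A)
    (hB : IsUnit (A + vecMulVec z w)) (u : n → R) :
    A⁻¹ *ᵥ u = (A + vecMulVec z w)⁻¹ *ᵥ u
      + (w ⬝ᵥ ((A + vecMulVec z w)⁻¹ *ᵥ u)) • (A⁻¹ *ᵥ z) := by
  rw [← sub_eq_iff_eq_add', ← sub_mulVec, inv_sub_inv (iff_of_true hA hB), add_sub_cancel_left,
    ← mulVec_mulVec, ← mulVec_mulVec, vecMulVec_mulVec, op_smul_eq_smul, mulVec_smul]

theorem dotProduct_inv_mulVec_eq_dotProduct_inv_rankOneUpdate_mulVec_mul (hA : IsUnit A)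
    (hB : IsUnit (A + vecMulVec z w)) (u : n → R) :
    w ⬝ᵥ (A⁻¹ *ᵥ u) = (w ⬝ᵥ ((A + vecMulVec z w)⁻¹ *ᵥ u)) * (1 + w ⬝ᵥ (A⁻¹ *ᵥ z)) := by
  rw [inv_mulVec_eq_inv_rankOneUpdate_mulVec_add hA hB u, dotProduct_add, dotProduct_smul,
    smul_eq_mul, mul_one_add]

theorem dotProduct_inv_mulVec_sub_dotProduct_inv_rankOneUpdate_mulVec (hA_symm : A.IsSymm)
    (hA : IsUnit A) (hB : IsUnit (A + vecMulVec z z)) (u : n → R) :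
    u ⬝ᵥ (A⁻¹ *ᵥ u) - u ⬝ᵥ ((A + vecMulVec z z)⁻¹ *ᵥ u) =
      (z ⬝ᵥ ((A + vecMulVec z z)⁻¹ *ᵥ u)) ^ 2 * (1 + z ⬝ᵥ (A⁻¹ *ᵥ z)) := by
  rw [inv_mulVec_eq_inv_rankOneUpdate_mulVec_add hA hB u, dotProduct_add, add_sub_cancel_left,
    dotProduct_smul, smul_eq_mul, dotProduct_mulVec_comm_of_isSymm hA_symm.inv,
    dotProduct_inv_mulVec_eq_dotProduct_inv_rankOneUpdate_mulVec_mul hA hB, sq, mul_assoc]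

theorem sq_residual_add_rankOneUpdate_eq (hA_symm : A.IsSymm) (hA : IsUnit A)
    (hB : IsUnit (A + vecMulVec z z)) (u : n → R) (r : R) :
    (r - z ⬝ᵥ ((A + vecMulVec z z)⁻¹ *ᵥ u)) ^ 2 - u ⬝ᵥ (A⁻¹ *ᵥ u)
        + (u + r • z) ⬝ᵥ ((A + vecMulVec z z)⁻¹ *ᵥ (u + r • z)) - r ^ 2 =
      r ^ 2 * (z ⬝ᵥ ((A + vecMulVec z z)⁻¹ *ᵥ z))
        - (z ⬝ᵥ ((A + vecMulVec z z)⁻¹ *ᵥ u)) ^ 2 * (z ⬝ᵥ (A⁻¹ *ᵥ z)) := by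
  have hB_symm : (A + vecMulVec z z).IsSymm := hA_symm.add (transpose_vecMulVec z z)
  rw [dotProduct_mulVec_add_smul_self hB_symm.inv]
  linear_combination
    -dotProduct_inv_mulVec_sub_dotProduct_inv_rankOneUpdate_mulVec hA_symm hA hB u

end RankOne

end CommRing

section Real

variable {n : Type*} [Fintype n] [DecidableEq n] {D : Matrix n n ℝ} {c : ℝ}

theorem posDef_inv_add_inv_smul_one (hD : D.PosDef) (hc : 0 < c) : (D⁻¹ + c⁻¹ • 1).PosDef :=
  hD.inv.add (PosDef.one.smul (inv_pos.2 hc))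

theorem dotProduct_inv_mulVec_sub_dotProduct_inv_smul_one_add_mulVec (hD : D.PosDef) (hc : 0 < c)
    (e : n → ℝ) :
    e ⬝ᵥ (D⁻¹ *ᵥ e) - e ⬝ᵥ ((c • 1 + D)⁻¹ *ᵥ e) =
      ((1 + c⁻¹ • D)⁻¹ *ᵥ e) ⬝ᵥ ((D⁻¹ + c⁻¹ • 1) *ᵥ ((1 + c⁻¹ • D)⁻¹ *ᵥ e)) := by
  have hC : (c • (1 : Matrix n n ℝ)).PosDef := PosDef.one.smul hc
  have hC_inv : (c • (1 : Matrix n n ℝ))⁻¹ = c⁻¹ • 1 :=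
    inv_eq_right_inv (by rw [smul_mul_smul_comm, mul_inv_cancel₀ hc.ne', one_smul, mul_one])
  simpa only [hC_inv, mul_smul_comm, mul_one] using
    dotProduct_inv_mulVec_sub_dotProduct_inv_add_mulVec (isHermitian_iff_isSymm.1 hD.isHermitian)
      hC.isUnit hD.isUnit (hC.add hD).isUnit e

end Real

section Laser

variable {d : ℕ} {b c : ℝ}

theorem posDef_Dmat (hb : 0 < b) (hbc : b < c) (x : ℕ → Fin d → ℝ) (t : ℕ) :
    (Dmat d b c x t).PosDef := by
  have hc : 0 < c := hb.trans hbc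
  induction t with
  | zero => exact PosDef.one.smul (div_pos (mul_pos hb hc) (sub_pos.2 hbc))
  | succ t ih =>
    exact (posDef_inv_add_inv_smul_one ih hc).inv.add_posSemidef
      (posSemidef_vecMulVec_self_star (x (t + 1)))

theorem laser_per_step_eq (hb : 0 < b) (hbc : b < c) (x : ℕ → Fin d → ℝ) (y : ℕ → ℝ) (t : ℕ) :
    (y (t + 1) - laserPred d b c x y t) ^ 2
        + (-(evec d b c x y t ⬝ᵥ ((Dmat d b c x t)⁻¹ *ᵥ evec d b c x y t)) + fsc d b c x y t)
        - (-(evec d b c x y (t + 1) ⬝ᵥ ((Dmat d b c x (t + 1))⁻¹ *ᵥ evec d b c x y (t + 1)))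
            + fsc d b c x y (t + 1)) =
      y (t + 1) ^ 2 * (x (t + 1) ⬝ᵥ ((Dmat d b c x (t + 1))⁻¹ *ᵥ x (t + 1)))
        - laserPred d b c x y t ^ 2
          * (x (t + 1) ⬝ᵥ (((Dmat d b c x t)⁻¹ + c⁻¹ • 1) *ᵥ x (t + 1))) := by
  have hc : 0 < c := hb.trans hbc
  have hD := posDef_Dmat hb hbc x t
  have hP := posDef_inv_add_inv_smul_one hD hc
  have hdrift := dotProduct_inv_mulVec_sub_dotProduct_inv_smul_one_add_mulVec hD hc
    (evec d b c x y t)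
  have hupdate := sq_residual_add_rankOneUpdate_eq
    (isHermitian_iff_isSymm.1 hP.inv.isHermitian) hP.inv.isUnit
    (posDef_Dmat hb hbc x (t + 1)).isUnit
    ((1 + c⁻¹ • Dmat d b c x t)⁻¹ *ᵥ evec d b c x y t) (y (t + 1))
  rw [nonsing_inv_nonsing_inv _ ((isUnit_iff_isUnit_det _).1 hP.isUnit)] at hupdate
  simp only [laserPred, Dmat, evec, fsc]
  linear_combination hupdate - hdrift

end Laser

theorem laser_per_step_inequality (d : ℕ) (hd : 1 ≤ d) (b c : ℝ) (hb : 0 < b) (hbc : b < c)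
    (x : ℕ → Fin d → ℝ) (y : ℕ → ℝ) :
    ∀ t : ℕ,
      (y (t + 1) - laserPred d b c x y t) ^ 2
        + (-(evec d b c x y t ⬝ᵥ ((Dmat d b c x t)⁻¹ *ᵥ evec d b c x y t))
            + fsc d b c x y t)
        - (-(evec d b c x y (t + 1) ⬝ᵥ ((Dmat d b c x (t + 1))⁻¹ *ᵥ evec d b c x y (t + 1)))
            + fsc d b c x y (t + 1))
      ≤ (y (t + 1)) ^ 2 * (x (t + 1) ⬝ᵥ ((Dmat d b c x (t + 1))⁻¹ *ᵥ x (t + 1))) := by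
  intro t
  have hgap : 0 ≤ x (t + 1) ⬝ᵥ (((Dmat d b c x t)⁻¹ + c⁻¹ • 1) *ᵥ x (t + 1)) :=
    (posDef_inv_add_inv_smul_one (posDef_Dmat hb hbc x t)
      (hb.trans hbc)).posSemidef.dotProduct_mulVec_nonneg (x (t + 1))
  rw [laser_per_step_eq hb hbc]
  exact sub_le_self _ (mul_nonneg (sq_nonneg _) hgap)
end

section
/- For every T ≥ 1, Σ_{t=1}^{T} x_tᵀ D_t^{-1} x_t ≤ ln det((1/b)·D_T) + c^{-1}·Σ_{t=1}^{T} Tr(D_{t-1}). -/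
open Matrix Finset

/-!
Since `log det` is concave, with gradient `B⁻¹` at `B`, we have
`log det A - log det B ≤ tr (B⁻¹ (A - B))` for positive definite `A` and `B`. Let
`A_t = (D_{t-1}⁻¹ + c⁻¹ I)⁻¹`, so that `D_t = A_t + x_t x_tᵀ`. The inequality for the pair
`(A_t, D_t)` reads `x_tᵀ D_t⁻¹ x_t ≤ log det D_t - log det A_t`, and for the pair `(D_{t-1}, A_t)`
it reads `log det D_{t-1} - log det A_t ≤ c⁻¹ tr D_{t-1}`. Adding the two and telescoping leaves
the boundary term `log det D_0`, and `D_0 ≥ b I` because `c / (c - b) ≥ 1`.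
-/

theorem posDef_add_vecMulVec_self {n : Type*} [Finite n] {A : Matrix n n ℝ}
    (hA : A.PosDef) (x : n → ℝ) : (A + vecMulVec x x).PosDef :=
  hA.add_posSemidef (posSemidef_vecMulVec_self_star x)

section LogDet

variable {n : Type*} [Fintype n] [DecidableEq n] {A B P : Matrix n n ℝ}

theorem log_det_smul {r : ℝ} (hr : r ≠ 0) (hA : A.det ≠ 0) :
    Real.log (r • A).det = Fintype.card n * Real.log r + Real.log A.det := by
  rw [det_smul, Real.log_mul (pow_ne_zero _ hr) hA, Real.log_pow]

theorem log_det_inv : Real.log A⁻¹.det = -Real.log A.det := by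
  rw [det_nonsing_inv, Ring.inverse_eq_inv', Real.log_inv]

theorem log_det_le_trace_sub_card (hA : A.PosDef) :
    Real.log A.det ≤ A.trace - Fintype.card n := by
  have det_eq : A.det = ∏ i, hA.1.eigenvalues i := hA.1.det_eq_prod_eigenvalues
  have trace_eq : A.trace = ∑ i, hA.1.eigenvalues i := hA.1.trace_eq_sum_eigenvalues
  calc Real.log A.det
      = ∑ i, Real.log (hA.1.eigenvalues i) := by
        rw [det_eq, Real.log_prod fun i _ ↦ (hA.eigenvalues_pos i).ne']
    _ ≤ ∑ i, (hA.1.eigenvalues i - 1) :=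
        sum_le_sum fun i _ ↦ Real.log_le_sub_one_of_pos (hA.eigenvalues_pos i)
    _ = A.trace - Fintype.card n := by simp [trace_eq]

open scoped MatrixOrder in
theorem log_det_sub_log_det_le_trace (hA : A.PosDef) (hB : B.PosDef) :
    Real.log A.det - Real.log B.det ≤ (B⁻¹ * (A - B)).trace := by
  -- `B⁻¹ * A` need not be symmetric, but `S * A * star S` is, with the same determinant and trace.
  obtain ⟨S, hS, hBS⟩ :=
    CStarAlgebra.isStrictlyPositive_iff_eq_star_mul_self.mp hB.inv.isStrictlyPositive
  have det_eq : (S * A * star S).det = A.det * B⁻¹.det := by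
    rw [hBS]
    simp only [det_mul]
    ring
  have trace_eq : (S * A * star S).trace = (B⁻¹ * A).trace := by
    rw [hBS, trace_mul_comm, mul_assoc]
  calc Real.log A.det - Real.log B.det
      = Real.log (S * A * star S).det := by
        rw [det_eq, Real.log_mul hA.det_pos.ne' hB.inv.det_pos.ne', log_det_inv, sub_eq_add_neg]
    _ ≤ (S * A * star S).trace - Fintype.card n :=
        log_det_le_trace_sub_card (hS.posDef_star_right_conjugate_iff.mpr hA)
    _ = (B⁻¹ * (A - B)).trace := by
        rw [trace_eq, mul_sub, nonsing_inv_mul _ hB.det_pos.ne'.isUnit, trace_sub, trace_one]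

theorem posDef_inv_inv_add (hA : A.PosDef) (hP : P.PosSemidef) : (A⁻¹ + P)⁻¹.PosDef :=
  (hA.inv.add_posSemidef hP).inv

theorem dotProduct_inv_mulVec_le_log_det_sub_log_det (hA : A.PosDef) (x : n → ℝ) :
    x ⬝ᵥ (A + vecMulVec x x)⁻¹ *ᵥ x ≤
      Real.log (A + vecMulVec x x).det - Real.log A.det := by
  have concavity := log_det_sub_log_det_le_trace hA (posDef_add_vecMulVec_self hA x)
  rw [sub_add_cancel_left, mul_neg, trace_neg, mul_vecMulVec, trace_vecMulVec,
    dotProduct_comm] at concavity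
  linarith

theorem log_det_sub_log_det_inv_inv_add_le_trace (hA : A.PosDef) (hP : P.PosSemidef) :
    Real.log A.det - Real.log (A⁻¹ + P)⁻¹.det ≤ (P * A).trace := by
  have hAP : IsUnit (A⁻¹ + P).det := (hA.inv.add_posSemidef hP).det_pos.ne'.isUnit
  have gradient_eq : (A⁻¹ + P)⁻¹⁻¹ * (A - (A⁻¹ + P)⁻¹) = P * A := by
    rw [nonsing_inv_nonsing_inv _ hAP, mul_sub, mul_nonsing_inv _ hAP, add_mul,
      nonsing_inv_mul _ hA.det_pos.ne'.isUnit, add_sub_cancel_left]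
  exact gradient_eq ▸ log_det_sub_log_det_le_trace hA (posDef_inv_inv_add hA hP)

end LogDet

section Recursion

variable {n : Type*} [Fintype n] [DecidableEq n] {D P : ℕ → Matrix n n ℝ} {x : ℕ → n → ℝ}

theorem posDef_of_recursion (hD₀ : (D 0).PosDef) (hP : ∀ t, (P t).PosSemidef)
    (hD : ∀ t, D (t + 1) = ((D t)⁻¹ + P t)⁻¹ + vecMulVec (x (t + 1)) (x (t + 1))) (t : ℕ) :
    (D t).PosDef := by
  induction t with
  | zero => exact hD₀
  | succ t ih => exact hD t ▸ posDef_add_vecMulVec_self (posDef_inv_inv_add ih (hP t)) _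

theorem sum_dotProduct_inv_mulVec_le_of_recursion (hD₀ : (D 0).PosDef)
    (hP : ∀ t, (P t).PosSemidef)
    (hD : ∀ t, D (t + 1) = ((D t)⁻¹ + P t)⁻¹ + vecMulVec (x (t + 1)) (x (t + 1))) (T : ℕ) :
    ∑ t ∈ range T, x (t + 1) ⬝ᵥ (D (t + 1))⁻¹ *ᵥ x (t + 1) ≤
      Real.log (D T).det - Real.log (D 0).det + ∑ t ∈ range T, (P t * D t).trace := by
  have step (t : ℕ) : x (t + 1) ⬝ᵥ (D (t + 1))⁻¹ *ᵥ x (t + 1) ≤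
      Real.log (D (t + 1)).det - Real.log (D t).det + (P t * D t).trace := by
    have hDt : (D t).PosDef := posDef_of_recursion hD₀ hP hD t
    have rank_one := dotProduct_inv_mulVec_le_log_det_sub_log_det
      (posDef_inv_inv_add hDt (hP t)) (x (t + 1))
    have shrinkage := log_det_sub_log_det_inv_inv_add_le_trace hDt (hP t)
    rw [← hD t] at rank_one
    linarith
  calc ∑ t ∈ range T, x (t + 1) ⬝ᵥ (D (t + 1))⁻¹ *ᵥ x (t + 1)
      ≤ ∑ t ∈ range T,
          (Real.log (D (t + 1)).det - Real.log (D t).det + (P t * D t).trace) :=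
        sum_le_sum fun t _ ↦ step t
    _ = Real.log (D T).det - Real.log (D 0).det + ∑ t ∈ range T, (P t * D t).trace := by
        rw [sum_add_distrib, sum_range_sub fun t ↦ Real.log (D t).det]

end Recursion

section Dmat

variable {d : ℕ} {b c : ℝ}

theorem posDef_Dmat_zero (hb : 0 < b) (hbc : b < c) (x : ℕ → Fin d → ℝ) :
    (Dmat d b c x 0).PosDef :=
  PosDef.one.smul (div_pos (mul_pos hb (hb.trans hbc)) (sub_pos.mpr hbc))

theorem mul_log_le_log_det_Dmat_zero (hb : 0 < b) (hbc : b < c) (x : ℕ → Fin d → ℝ) :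
    d * Real.log b ≤ Real.log (Dmat d b c x 0).det := by
  have b_le : b ≤ b * c / (c - b) := by
    rw [le_div_iff₀ (sub_pos.mpr hbc)]
    nlinarith
  calc d * Real.log b
      ≤ d * Real.log (b * c / (c - b)) := by gcongr
    _ = Real.log (Dmat d b c x 0).det := by simp [Dmat]

end Dmat

theorem laser_quadratic_sum_bound (d : ℕ) (hd : 1 ≤ d) (b c : ℝ)
    (hb : 0 < b) (hbc : b < c) (x : ℕ → Fin d → ℝ) (T : ℕ) (hT : 1 ≤ T) :
    ∑ t ∈ Finset.range T, x (t + 1) ⬝ᵥ ((Dmat d b c x (t + 1))⁻¹ *ᵥ x (t + 1)) ≤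
      Real.log ((b⁻¹ • Dmat d b c x T).det)
        + c⁻¹ * ∑ t ∈ Finset.range T, (Dmat d b c x t).trace := by
  have hD₀ := posDef_Dmat_zero hb hbc x
  have hP (_ : ℕ) : (c⁻¹ • (1 : Matrix (Fin d) (Fin d) ℝ)).PosSemidef :=
    PosSemidef.one.smul (inv_nonneg.mpr (hb.trans hbc).le)
  have hDT : (Dmat d b c x T).PosDef := posDef_of_recursion hD₀ hP (fun _ ↦ rfl) T
  have telescoped := sum_dotProduct_inv_mulVec_le_of_recursion hD₀ hP (fun _ ↦ rfl) T
  have initial := mul_log_le_log_det_Dmat_zero hb hbc x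
  simp only [smul_mul, one_mul, trace_smul, smul_eq_mul, ← mul_sum] at telescoped
  rw [log_det_smul (inv_ne_zero hb.ne') hDT.det_pos.ne', Fintype.card_fin, Real.log_inv]
  linarith
end

section
/- Assume ‖x_t‖² ≤ X² and |y_t| ≤ Y for all t, with X > 0 and Y > 0. Fix T ≥ 1, a comparator sequence u_1, …, u_T ∈ ℝ^d with total drift V = Σ_{t=1}^{T-1} ‖u_{t+1} − u_t‖² > 0, and 0 < ε < 1. Set c = √(Y²·d·M·T / V), b = ε·c, μ = max{ (9/8)·X², (b + X²)²/(8X²) }, and M = max{ 3X², b + X² }. If V ≥ T·Y²·d·M / μ², then L_T(LASER) ≤ b‖u_1‖² + 2·√(Y²·d·T·M·V) + (ε/(1−ε))·Y²·d + L_T({u_t}) + Y²·ln det((1/b)·D_T), where L_T({u_t}) = Σ_{t=1}^{T} (y_t − u_tᵀ x_t)². -/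
open Matrix Finset

/-!
Let `Q_t(u) = uᵀ D_t u - 2 uᵀ e_t + f_t`. Dynamic programming over the last comparator shows that
`Q_T(u_T)` is at most the regularized loss
`b‖u₁‖² + c ∑ ‖u_{t+1} - u_t‖² + ∑ (y_t - u_tᵀ x_t)²`, because `(D_{t-1}⁻¹ + c⁻¹ I)⁻¹` is the
matrix of the infimal convolution of `D_{t-1}` with `c‖·‖²`. On the other hand the loss of LASER in
round `t` exceeds the increase of `min Q_t` by at most `y_t² x_tᵀ D_t⁻¹ x_t`, which is bounded by
`y_t² (ln det D_t - ln det D_{t-1} + c⁻¹ tr D_{t-1})`. In the high-drift regime `D_t ≤ M I` for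
`t ≥ 1`, so these later traces contribute at most `Y² d T M / c`, which the choice of `c` balances
with `c V`; the trace of `D₀` accounts for the term `ε / (1 - ε) Y² d`.
-/

namespace Laser

section CommRing

variable {n R : Type*} [Fintype n] [CommRing R] {A : Matrix n n R}

lemma add_vecMulVec_mulVec (A : Matrix n n R) (x z v : n → R) :
    (A + vecMulVec x z) *ᵥ v = A *ᵥ v + (z ⬝ᵥ v) • x := by
  rw [add_mulVec, vecMulVec_mulVec, op_smul_eq_smul]

variable [DecidableEq n]

lemma mulVec_inv_mulVec (hA : IsUnit A) (v : n → R) : A *ᵥ A⁻¹ *ᵥ v = v := by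
  rw [mulVec_mulVec, mul_nonsing_inv _ ((isUnit_iff_isUnit_det A).1 hA), one_mulVec]

lemma inv_mulVec_mulVec (hA : IsUnit A) (v : n → R) : A⁻¹ *ᵥ A *ᵥ v = v := by
  rw [mulVec_mulVec, nonsing_inv_mul _ ((isUnit_iff_isUnit_det A).1 hA), one_mulVec]

lemma det_sub_vecMulVec (hA : IsUnit A) (x v : n → R) :
    (A - vecMulVec x v).det = A.det * (1 - v ⬝ᵥ A⁻¹ *ᵥ x) := by
  have hfactor : A - vecMulVec x v = A * (1 + vecMulVec (-(A⁻¹ *ᵥ x)) v) := by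
    rw [neg_vecMulVec, ← sub_eq_add_neg, mul_sub, mul_one, mul_vecMulVec, mulVec_inv_mulVec hA]
  rw [hfactor, det_mul, vecMulVec_eq Unit, det_one_add_replicateCol_mul_replicateRow,
    dotProduct_neg, sub_eq_add_neg]

end CommRing

section PosDef

variable {n : Type*} {A D : Matrix n n ℝ} {c : ℝ}

lemma posDef_add_vecMulVec_self [Finite n] (hA : A.PosDef) (x : n → ℝ) :
    (A + vecMulVec x x).PosDef := by
  have := Fintype.ofFinite n
  exact hA.add_posSemidef (by simpa using posSemidef_vecMulVec_self_star x)

lemma posDef_add_smul_one [DecidableEq n] (hD : D.PosDef) (hc : 0 < c) : (D + c • 1).PosDef :=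
  hD.add (PosDef.one.smul hc)

lemma posDef_one_add_inv_smul [DecidableEq n] (hD : D.PosDef) (hc : 0 < c) :
    (1 + c⁻¹ • D).PosDef :=
  PosDef.one.add (hD.smul (inv_pos.2 hc))

variable [Fintype n]

lemma dotProduct_mulVec_nonneg (hA : A.PosSemidef) (v : n → ℝ) : 0 ≤ v ⬝ᵥ A *ᵥ v := by
  simpa using hA.dotProduct_mulVec_nonneg v

lemma dotProduct_mulVec_comm (hA : A.IsHermitian) (v w : n → ℝ) :
    v ⬝ᵥ A *ᵥ w = w ⬝ᵥ A *ᵥ v := by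
  rw [← dotProduct_transpose_mulVec, ← conjTranspose_eq_transpose_of_trivial, hA.eq]

lemma dotProduct_sq_le (v w : n → ℝ) : (v ⬝ᵥ w) ^ 2 ≤ (v ⬝ᵥ v) * (w ⬝ᵥ w) := by
  simpa only [dotProduct, sq] using sum_mul_sq_le_sq_mul_sq univ v w

lemma dotProduct_add_vecMulVec_mulVec_le {x : n → ℝ} {m r : ℝ}
    (hA : ∀ v, v ⬝ᵥ A *ᵥ v ≤ m * (v ⬝ᵥ v)) (hx : x ⬝ᵥ x ≤ r) (v : n → ℝ) :
    v ⬝ᵥ (A + vecMulVec x x) *ᵥ v ≤ (m + r) * (v ⬝ᵥ v) := by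
  have hv : 0 ≤ v ⬝ᵥ v := by simpa using dotProduct_star_self_nonneg v
  calc v ⬝ᵥ (A + vecMulVec x x) *ᵥ v = v ⬝ᵥ A *ᵥ v + (x ⬝ᵥ v) ^ 2 := by
        rw [add_vecMulVec_mulVec, dotProduct_add, dotProduct_smul, smul_eq_mul,
          dotProduct_comm v x, sq]
    _ ≤ m * (v ⬝ᵥ v) + r * (v ⬝ᵥ v) :=
        add_le_add (hA v) ((dotProduct_sq_le x v).trans (mul_le_mul_of_nonneg_right hx hv))
    _ = (m + r) * (v ⬝ᵥ v) := by ring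

lemma trace_le_card_mul (h : ∀ v, v ⬝ᵥ A *ᵥ v ≤ c * (v ⬝ᵥ v)) :
    A.trace ≤ Fintype.card n * c := by
  classical
  calc A.trace = ∑ i, A i i := rfl
    _ ≤ ∑ _i : n, c := sum_le_sum fun i _ => by simpa using h (Pi.single i 1)
    _ = Fintype.card n * c := by simp

variable [DecidableEq n]

lemma neg_dotProduct_inv_mulVec_le (hD : D.PosDef) (e u : n → ℝ) :
    -(e ⬝ᵥ D⁻¹ *ᵥ e) ≤ u ⬝ᵥ D *ᵥ u - 2 * (u ⬝ᵥ e) := by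
  have square_nonneg := dotProduct_mulVec_nonneg hD.posSemidef (u - D⁻¹ *ᵥ e)
  rw [mulVec_sub, mulVec_inv_mulVec hD.isUnit, sub_dotProduct, dotProduct_sub, dotProduct_sub,
    dotProduct_mulVec_comm hD.isHermitian (D⁻¹ *ᵥ e) u, mulVec_inv_mulVec hD.isUnit,
    dotProduct_comm (D⁻¹ *ᵥ e) e] at square_nonneg
  linarith

lemma sq_add_dotProduct_inv_le (hA : A.PosDef) (x e : n → ℝ) :
    (x ⬝ᵥ (A + vecMulVec x x)⁻¹ *ᵥ e) ^ 2 + e ⬝ᵥ (A + vecMulVec x x)⁻¹ *ᵥ e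
      ≤ e ⬝ᵥ A⁻¹ *ᵥ e := by
  set w := (A + vecMulVec x x)⁻¹ *ᵥ e with hw
  have he : e = A *ᵥ w + (x ⬝ᵥ w) • x := by
    rw [← add_vecMulVec_mulVec, hw,
      mulVec_inv_mulVec (posDef_add_vecMulVec_self hA x).isUnit]
  have expansion : e ⬝ᵥ A⁻¹ *ᵥ e
      = e ⬝ᵥ w + (x ⬝ᵥ w) ^ 2 + (x ⬝ᵥ w) ^ 2 * (x ⬝ᵥ A⁻¹ *ᵥ x) := by
    have hinv : A⁻¹ *ᵥ e = w + (x ⬝ᵥ w) • A⁻¹ *ᵥ x := by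
      rw [he, mulVec_add, mulVec_smul, inv_mulVec_mulVec hA.isUnit]
    have hx : e ⬝ᵥ A⁻¹ *ᵥ x = x ⬝ᵥ w + (x ⬝ᵥ w) * (x ⬝ᵥ A⁻¹ *ᵥ x) := by
      rw [dotProduct_mulVec_comm hA.inv.isHermitian, hinv, dotProduct_add, dotProduct_smul,
        smul_eq_mul]
    rw [hinv, dotProduct_add, dotProduct_smul, hx, smul_eq_mul]
    ring
  nlinarith [mul_nonneg (sq_nonneg (x ⬝ᵥ w)) (dotProduct_mulVec_nonneg hA.inv.posSemidef x)]

lemma sq_sub_dotProduct_inv_mulVec_le (hA : A.PosDef) (x e : n → ℝ) (y : ℝ) :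
    (y - x ⬝ᵥ (A + vecMulVec x x)⁻¹ *ᵥ e) ^ 2
      ≤ y ^ 2 + e ⬝ᵥ A⁻¹ *ᵥ e - (e + y • x) ⬝ᵥ (A + vecMulVec x x)⁻¹ *ᵥ (e + y • x)
        + y ^ 2 * (x ⬝ᵥ (A + vecMulVec x x)⁻¹ *ᵥ x) := by
  have key := sq_add_dotProduct_inv_le hA x e
  have symm := dotProduct_mulVec_comm (posDef_add_vecMulVec_self hA x).inv.isHermitian e x
  simp only [mulVec_add, mulVec_smul, dotProduct_add, add_dotProduct, smul_dotProduct,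
    dotProduct_smul, smul_eq_mul, symm]
  linarith

lemma dotProduct_inv_mulVec_le_log_det_sub (hA : A.PosDef) (x : n → ℝ) :
    x ⬝ᵥ (A + vecMulVec x x)⁻¹ *ᵥ x
      ≤ Real.log (A + vecMulVec x x).det - Real.log A.det := by
  have hS := posDef_add_vecMulVec_self hA x
  set S := A + vecMulVec x x with hSdef
  have hdet : A.det = S.det * (1 - x ⬝ᵥ S⁻¹ *ᵥ x) := by
    rw [← det_sub_vecMulVec hS.isUnit, hSdef, add_sub_cancel_right]
  have hpos : 0 < 1 - x ⬝ᵥ S⁻¹ *ᵥ x :=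
    pos_of_mul_pos_right (hdet ▸ hA.det_pos) hS.det_pos.le
  rw [hdet, Real.log_mul hS.det_pos.ne' hpos.ne']
  linarith [Real.log_le_sub_one_of_pos hpos]

lemma log_det_le_trace_sub_card (hA : A.PosDef) :
    Real.log A.det ≤ A.trace - Fintype.card n := by
  have hpos := hA.eigenvalues_pos
  have hdet : A.det = ∏ i, hA.isHermitian.eigenvalues i := by
    simpa using hA.isHermitian.det_eq_prod_eigenvalues
  have htrace : A.trace = ∑ i, hA.isHermitian.eigenvalues i := by
    simpa using hA.isHermitian.trace_eq_sum_eigenvalues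
  calc Real.log A.det = ∑ i, Real.log (hA.isHermitian.eigenvalues i) := by
        rw [hdet, Real.log_prod fun i _ => (hpos i).ne']
    _ ≤ ∑ i, (hA.isHermitian.eigenvalues i - 1) :=
        sum_le_sum fun i _ => Real.log_le_sub_one_of_pos (hpos i)
    _ = A.trace - Fintype.card n := by simp [htrace]

/-- The parallel sum `(D⁻¹ + c⁻¹ I)⁻¹` of `D` and `c I`: for positive definite `D` it is the matrix
of the quadratic form `u ↦ min_p (pᵀ D p + c ‖u - p‖²)`. -/
noncomputable def parallelSum (D : Matrix n n ℝ) (c : ℝ) : Matrix n n ℝ :=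
  (D⁻¹ + c⁻¹ • 1)⁻¹

lemma posDef_inv_add_inv_smul_one (hD : D.PosDef) (hc : 0 < c) : (D⁻¹ + c⁻¹ • 1).PosDef :=
  hD.inv.add (PosDef.one.smul (inv_pos.2 hc))

lemma posDef_parallelSum (hD : D.PosDef) (hc : 0 < c) : (parallelSum D c).PosDef :=
  (posDef_inv_add_inv_smul_one hD hc).inv

lemma inv_one_add_inv_smul (hD : D.PosDef) (hc : 0 < c) :
    (1 + c⁻¹ • D)⁻¹ = c • (D + c • 1)⁻¹ := by
  have hunit := (posDef_add_smul_one hD hc).det_pos.ne'.isUnit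
  refine inv_eq_right_inv ?_
  calc (1 + c⁻¹ • D) * c • (D + c • 1)⁻¹ = (D + c • 1) * (D + c • 1)⁻¹ := by
        rw [mul_smul_comm, ← smul_mul_assoc, smul_add, smul_inv_smul₀ hc.ne', add_comm]
    _ = 1 := mul_nonsing_inv _ hunit

lemma parallelSum_mul_one_add_inv_smul (hD : D.PosDef) (hc : 0 < c) :
    parallelSum D c * (1 + c⁻¹ • D) = D := by
  have hfactor : 1 + c⁻¹ • D = (D⁻¹ + c⁻¹ • 1) * D := by
    rw [add_mul, nonsing_inv_mul _ hD.det_pos.ne'.isUnit, smul_mul_assoc, one_mul]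
  rw [hfactor, parallelSum, nonsing_inv_mul_cancel_left]
  exact (posDef_inv_add_inv_smul_one hD hc).det_pos.ne'.isUnit

lemma parallelSum_eq_sub (hD : D.PosDef) (hc : 0 < c) :
    parallelSum D c = c • 1 - c ^ 2 • (D + c • 1)⁻¹ := by
  have hN := (posDef_add_smul_one hD hc).det_pos.ne'.isUnit
  have hB : IsUnit (1 + c⁻¹ • D).det :=
    (posDef_one_add_inv_smul hD hc).det_pos.ne'.isUnit
  calc parallelSum D c = D * (1 + c⁻¹ • D)⁻¹ := by
        rw [← mul_nonsing_inv_cancel_right _ (parallelSum D c) hB,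
          parallelSum_mul_one_add_inv_smul hD hc]
    _ = c • ((D + c • 1) * (D + c • 1)⁻¹ - c • (D + c • 1)⁻¹) := by
        rw [inv_one_add_inv_smul hD hc, mul_smul_comm, add_mul, smul_mul_assoc, one_mul,
          add_sub_cancel_right]
    _ = c • 1 - c ^ 2 • (D + c • 1)⁻¹ := by
        rw [mul_nonsing_inv _ hN, smul_sub, smul_smul, sq]

-- As a function of `p` the right-hand side is quadratic with matrix `D + c I`; complete the square.
lemma parallelSum_form_le_infConvolution (hD : D.PosDef) (hc : 0 < c) (e u p : n → ℝ) :
    u ⬝ᵥ parallelSum D c *ᵥ u - 2 * (u ⬝ᵥ (1 + c⁻¹ • D)⁻¹ *ᵥ e) - e ⬝ᵥ (D + c • 1)⁻¹ *ᵥ e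
      ≤ p ⬝ᵥ D *ᵥ p - 2 * (p ⬝ᵥ e) + c * ((u - p) ⬝ᵥ (u - p)) := by
  have hN := posDef_add_smul_one hD hc
  have key := neg_dotProduct_inv_mulVec_le hN (e + c • u) p
  have symm := dotProduct_mulVec_comm hN.inv.isHermitian e u
  rw [parallelSum_eq_sub hD hc, inv_one_add_inv_smul hD hc]
  simp only [add_mulVec, sub_mulVec, smul_mulVec, one_mulVec, mulVec_add, mulVec_smul,
    add_dotProduct, dotProduct_add, sub_dotProduct, dotProduct_sub, smul_dotProduct,
    dotProduct_smul, smul_eq_mul, symm, dotProduct_comm p u] at key ⊢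
  linarith

lemma dotProduct_parallelSum_mulVec_le (hD : D.PosDef) (hc : 0 < c) (u p : n → ℝ) :
    u ⬝ᵥ parallelSum D c *ᵥ u ≤ p ⬝ᵥ D *ᵥ p + c * ((u - p) ⬝ᵥ (u - p)) := by
  simpa using parallelSum_form_le_infConvolution hD hc 0 u p

lemma dotProduct_parallelSum_mulVec_le_of_le {m : ℝ} (hD : D.PosDef) (hc : 0 < c)
    (hm : 0 < m) (h : ∀ v, v ⬝ᵥ D *ᵥ v ≤ m * (v ⬝ᵥ v)) (v : n → ℝ) :
    v ⬝ᵥ parallelSum D c *ᵥ v ≤ m * c / (m + c) * (v ⬝ᵥ v) := by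
  set a := c / (m + c) with ha
  have hsub : v - a • v = (1 - a) • v := by rw [sub_smul, one_smul]
  calc v ⬝ᵥ parallelSum D c *ᵥ v
      ≤ (a • v) ⬝ᵥ D *ᵥ (a • v) + c * ((v - a • v) ⬝ᵥ (v - a • v)) :=
        dotProduct_parallelSum_mulVec_le hD hc v (a • v)
    _ ≤ m * ((a • v) ⬝ᵥ (a • v)) + c * ((v - a • v) ⬝ᵥ (v - a • v)) := by gcongr; exact h _
    _ = (m * a ^ 2 + c * (1 - a) ^ 2) * (v ⬝ᵥ v) := by
        simp only [hsub, smul_dotProduct, dotProduct_smul, smul_eq_mul]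
        ring
    _ = m * c / (m + c) * (v ⬝ᵥ v) := by
        congr 1
        rw [ha]
        field_simp
        ring

lemma dotProduct_inv_parallelSum_mulVec (hD : D.PosDef) (hc : 0 < c) (e : n → ℝ) :
    ((1 + c⁻¹ • D)⁻¹ *ᵥ e) ⬝ᵥ (parallelSum D c)⁻¹ *ᵥ ((1 + c⁻¹ • D)⁻¹ *ᵥ e)
      = e ⬝ᵥ D⁻¹ *ᵥ e - e ⬝ᵥ (D + c • 1)⁻¹ *ᵥ e := by
  have hB := posDef_one_add_inv_smul hD hc
  have hinv : (1 + c⁻¹ • D)⁻¹ * (parallelSum D c)⁻¹ = D⁻¹ := by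
    rw [← Matrix.mul_inv_rev, parallelSum_mul_one_add_inv_smul hD hc]
  have hresolvent : D⁻¹ * (1 + c⁻¹ • D)⁻¹ = D⁻¹ - (D + c • 1)⁻¹ := by
    rw [Matrix.inv_sub_inv (iff_of_true hD.isUnit (posDef_add_smul_one hD hc).isUnit),
      add_sub_cancel_left, inv_one_add_inv_smul hD hc, mul_smul_comm, mul_smul_comm, mul_one,
      smul_mul_assoc]
  rw [dotProduct_comm, dotProduct_mulVec_comm hB.inv.isHermitian, mulVec_mulVec, hinv,
    mulVec_mulVec, hresolvent, sub_mulVec, dotProduct_sub]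

lemma log_det_le_log_det_parallelSum_add (hD : D.PosDef) (hc : 0 < c) :
    Real.log D.det ≤ Real.log (parallelSum D c).det + c⁻¹ * D.trace := by
  have hB := posDef_one_add_inv_smul hD hc
  have hlog : Real.log D.det = Real.log (parallelSum D c).det + Real.log (1 + c⁻¹ • D).det := by
    rw [← Real.log_mul (posDef_parallelSum hD hc).det_pos.ne' hB.det_pos.ne', ← det_mul,
      parallelSum_mul_one_add_inv_smul hD hc]
  have htrace := log_det_le_trace_sub_card hB
  simp only [trace_add, trace_one, trace_smul, smul_eq_mul] at htrace
  linarith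

end PosDef

section Recursion

variable {d : ℕ} {b c : ℝ}

lemma Dmat_succ (x : ℕ → Fin d → ℝ) (t : ℕ) : Dmat d b c x (t + 1) =
    parallelSum (Dmat d b c x t) c + vecMulVec (x (t + 1)) (x (t + 1)) :=
  rfl

lemma posDef_Dmat (hb : 0 < b) (hbc : b < c) (x : ℕ → Fin d → ℝ) (t : ℕ) :
    (Dmat d b c x t).PosDef := by
  have hc := hb.trans hbc
  induction t with
  | zero => exact PosDef.one.smul (div_pos (mul_pos hb hc) (sub_pos.2 hbc))
  | succ t ih => exact posDef_add_vecMulVec_self (posDef_parallelSum ih hc) _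

-- This is why `D₀` is scaled by `bc / (c - b)`.
lemma parallelSum_Dmat_zero (hb : 0 < b) (hbc : b < c) (x : ℕ → Fin d → ℝ) :
    parallelSum (Dmat d b c x 0) c = b • 1 := by
  have hc := hb.trans hbc
  have hinv : (Dmat d b c x 0)⁻¹ = ((c - b) / (b * c)) • 1 := by
    refine inv_eq_left_inv ?_
    rw [Dmat, smul_mul_smul_comm, one_mul, div_mul_div_cancel₀' (sub_pos.2 hbc).ne',
      div_self (by positivity), one_smul]
  have hscalar : b * ((c - b) / (b * c) + c⁻¹) = 1 := by field_simp; ring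
  refine inv_eq_left_inv ?_
  rw [hinv, ← add_smul, smul_mul_smul_comm, one_mul, hscalar, one_smul]

/-- The constant term `f_t` of the cost-to-arrive: what is left over when the preceding comparators
are minimized out one after another. -/
noncomputable def arrivalOffset (d : ℕ) (b c : ℝ) (x : ℕ → Fin d → ℝ) (y : ℕ → ℝ) (t : ℕ) : ℝ :=
  ∑ s ∈ range t, (y (s + 1) ^ 2
    - evec d b c x y s ⬝ᵥ (Dmat d b c x s + c • 1)⁻¹ *ᵥ evec d b c x y s)

/-- The cost-to-arrive `Q_t(u) = uᵀ D_t u - 2 uᵀ e_t + f_t`: for `t ≥ 1`, the least regularized loss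
`b‖u₁‖² + c ∑ ‖u_{s+1} - u_s‖² + ∑ (y_s - u_sᵀ x_s)²` over comparators `u₁, …, u_t` with
`u_t = u`. -/
noncomputable def arrivalCost (d : ℕ) (b c : ℝ) (x : ℕ → Fin d → ℝ) (y : ℕ → ℝ) (t : ℕ)
    (u : Fin d → ℝ) : ℝ :=
  u ⬝ᵥ Dmat d b c x t *ᵥ u - 2 * (u ⬝ᵥ evec d b c x y t) + arrivalOffset d b c x y t

/-- The minimum `f_t - e_tᵀ D_t⁻¹ e_t` of the cost-to-arrive `Q_t`. -/
noncomputable def minArrivalCost (d : ℕ) (b c : ℝ) (x : ℕ → Fin d → ℝ) (y : ℕ → ℝ) (t : ℕ) : ℝ :=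
  arrivalOffset d b c x y t - evec d b c x y t ⬝ᵥ (Dmat d b c x t)⁻¹ *ᵥ evec d b c x y t

lemma minArrivalCost_le_arrivalCost (hb : 0 < b) (hbc : b < c) (x : ℕ → Fin d → ℝ) (y : ℕ → ℝ)
    (t : ℕ) (u : Fin d → ℝ) : minArrivalCost d b c x y t ≤ arrivalCost d b c x y t u := by
  have := neg_dotProduct_inv_mulVec_le (posDef_Dmat hb hbc x t) (evec d b c x y t) u
  unfold minArrivalCost arrivalCost
  linarith

lemma arrivalCost_one (hb : 0 < b) (hbc : b < c) (x : ℕ → Fin d → ℝ) (y : ℕ → ℝ)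
    (u : Fin d → ℝ) :
    arrivalCost d b c x y 1 u = b * (u ⬝ᵥ u) + (y 1 - u ⬝ᵥ x 1) ^ 2 := by
  have hD : Dmat d b c x 1 = b • 1 + vecMulVec (x 1) (x 1) := by
    rw [Dmat_succ, parallelSum_Dmat_zero hb hbc]
  have he : evec d b c x y 1 = y 1 • x 1 := by simp [evec]
  have hf : arrivalOffset d b c x y 1 = y 1 ^ 2 := by simp [arrivalOffset, evec]
  rw [arrivalCost, hD, he, hf, add_vecMulVec_mulVec, smul_mulVec, one_mulVec, dotProduct_add,
    dotProduct_smul, dotProduct_smul, dotProduct_smul, dotProduct_comm (x 1) u]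
  simp only [smul_eq_mul]
  ring

lemma arrivalCost_succ_le (hb : 0 < b) (hbc : b < c) (x : ℕ → Fin d → ℝ) (y : ℕ → ℝ) (t : ℕ)
    (u p : Fin d → ℝ) : arrivalCost d b c x y (t + 1) u ≤
      arrivalCost d b c x y t p + c * ((u - p) ⬝ᵥ (u - p)) + (y (t + 1) - u ⬝ᵥ x (t + 1)) ^ 2 := by
  have key := parallelSum_form_le_infConvolution (posDef_Dmat hb hbc x t) (hb.trans hbc)
    (evec d b c x y t) u p
  rw [arrivalCost, arrivalCost, Dmat_succ, evec, arrivalOffset, sum_range_succ, ← arrivalOffset,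
    add_vecMulVec_mulVec, dotProduct_add, dotProduct_add, dotProduct_smul, dotProduct_smul,
    smul_eq_mul, smul_eq_mul, dotProduct_comm (x (t + 1)) u]
  linarith

lemma arrivalCost_le_regularizedLoss (hb : 0 < b) (hbc : b < c) (x : ℕ → Fin d → ℝ) (y : ℕ → ℝ)
    (u : ℕ → Fin d → ℝ) (n : ℕ) :
    arrivalCost d b c x y (n + 1) (u (n + 1)) ≤ b * (u 1 ⬝ᵥ u 1)
      + c * ∑ t ∈ range n, (u (t + 2) - u (t + 1)) ⬝ᵥ (u (t + 2) - u (t + 1))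
      + ∑ t ∈ range (n + 1), (y (t + 1) - u (t + 1) ⬝ᵥ x (t + 1)) ^ 2 := by
  induction n with
  | zero => simp [arrivalCost_one hb hbc]
  | succ n ih =>
    have := arrivalCost_succ_le hb hbc x y (n + 1) (u (n + 2)) (u (n + 1))
    rw [sum_range_succ _ (n + 1), sum_range_succ _ n]
    linarith

lemma sq_sub_laserPred_le (hb : 0 < b) (hbc : b < c) (x : ℕ → Fin d → ℝ) (y : ℕ → ℝ) (t : ℕ) :
    (y (t + 1) - laserPred d b c x y t) ^ 2
      ≤ minArrivalCost d b c x y (t + 1) - minArrivalCost d b c x y t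
        + y (t + 1) ^ 2 * (x (t + 1) ⬝ᵥ (Dmat d b c x (t + 1))⁻¹ *ᵥ x (t + 1)) := by
  have hc := hb.trans hbc
  have hD := posDef_Dmat hb hbc x t
  have key := sq_sub_dotProduct_inv_mulVec_le (posDef_parallelSum hD hc) (x (t + 1))
    ((1 + c⁻¹ • Dmat d b c x t)⁻¹ *ᵥ evec d b c x y t) (y (t + 1))
  rw [dotProduct_inv_parallelSum_mulVec hD hc, ← Dmat_succ, ← evec, ← laserPred] at key
  rw [minArrivalCost, minArrivalCost, arrivalOffset, sum_range_succ, ← arrivalOffset]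
  linarith

lemma dotProduct_inv_Dmat_succ_le (hb : 0 < b) (hbc : b < c) (x : ℕ → Fin d → ℝ) (t : ℕ) :
    x (t + 1) ⬝ᵥ (Dmat d b c x (t + 1))⁻¹ *ᵥ x (t + 1)
      ≤ Real.log (Dmat d b c x (t + 1)).det - Real.log (Dmat d b c x t).det
        + c⁻¹ * (Dmat d b c x t).trace := by
  have hc := hb.trans hbc
  have hD := posDef_Dmat hb hbc x t
  have rank_one := dotProduct_inv_mulVec_le_log_det_sub (posDef_parallelSum hD hc) (x (t + 1))
  rw [← Dmat_succ] at rank_one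
  linarith [log_det_le_log_det_parallelSum_add hD hc]

lemma laserLoss_le_minArrivalCost_add (hb : 0 < b) (hbc : b < c) (x : ℕ → Fin d → ℝ) {y : ℕ → ℝ}
    {Y : ℝ} (hy : ∀ t, |y (t + 1)| ≤ Y) (T : ℕ) :
    laserLoss d b c x y T ≤ minArrivalCost d b c x y T + Y ^ 2 * (Real.log (Dmat d b c x T).det
      - Real.log (Dmat d b c x 0).det + c⁻¹ * ∑ t ∈ range T, (Dmat d b c x t).trace) := by
  have round (t : ℕ) : (y (t + 1) - laserPred d b c x y t) ^ 2
      ≤ (minArrivalCost d b c x y (t + 1) - minArrivalCost d b c x y t)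
        + Y ^ 2 * ((Real.log (Dmat d b c x (t + 1)).det - Real.log (Dmat d b c x t).det)
          + c⁻¹ * (Dmat d b c x t).trace) := by
    refine (sq_sub_laserPred_le hb hbc x y t).trans (add_le_add_right ?_ _)
    exact mul_le_mul (sq_le_sq.2 ((hy t).trans (le_abs_self Y)))
      (dotProduct_inv_Dmat_succ_le hb hbc x t)
      (dotProduct_mulVec_nonneg (posDef_Dmat hb hbc x (t + 1)).inv.posSemidef _) (sq_nonneg Y)
  have hzero : minArrivalCost d b c x y 0 = 0 := by simp [minArrivalCost, arrivalOffset, evec]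
  refine (sum_le_sum fun t _ => round t).trans_eq ?_
  rw [sum_add_distrib, ← mul_sum, sum_add_distrib, ← mul_sum, sum_range_sub, hzero, sub_zero,
    sum_range_sub fun t => Real.log (Dmat d b c x t).det]

lemma log_det_Dmat_sub_le (hb : 0 < b) (hbc : b < c) (x : ℕ → Fin d → ℝ) (T : ℕ) :
    Real.log (Dmat d b c x T).det - Real.log (Dmat d b c x 0).det
      ≤ Real.log (b⁻¹ • Dmat d b c x T).det := by
  have hle : b ≤ b * c / (c - b) := by
    rw [le_div_iff₀ (sub_pos.2 hbc)]
    nlinarith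
  have hlog : d * Real.log b ≤ Real.log (Dmat d b c x 0).det := by
    rw [Dmat, det_smul, det_one, mul_one, Fintype.card_fin, Real.log_pow]
    gcongr
  rw [det_smul, Fintype.card_fin,
    Real.log_mul (pow_ne_zero _ (inv_ne_zero hb.ne')) (posDef_Dmat hb hbc x T).det_pos.ne',
    Real.log_pow, Real.log_inv]
  linarith

theorem laserLoss_le_regularizedLoss_add (hb : 0 < b) (hbc : b < c) (x : ℕ → Fin d → ℝ)
    {y : ℕ → ℝ} {Y : ℝ} (hy : ∀ t, |y (t + 1)| ≤ Y) (u : ℕ → Fin d → ℝ) (n : ℕ) :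
    laserLoss d b c x y (n + 1) ≤ b * (u 1 ⬝ᵥ u 1)
      + c * ∑ t ∈ range n, (u (t + 2) - u (t + 1)) ⬝ᵥ (u (t + 2) - u (t + 1))
      + ∑ t ∈ range (n + 1), (y (t + 1) - u (t + 1) ⬝ᵥ x (t + 1)) ^ 2
      + Y ^ 2 * (Real.log (b⁻¹ • Dmat d b c x (n + 1)).det
        + c⁻¹ * ∑ t ∈ range (n + 1), (Dmat d b c x t).trace) := by
  refine (laserLoss_le_minArrivalCost_add hb hbc x hy (n + 1)).trans ?_
  gcongr
  · exact (minArrivalCost_le_arrivalCost hb hbc x y _ _).trans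
      (arrivalCost_le_regularizedLoss hb hbc x y u n)
  · exact log_det_Dmat_sub_le hb hbc x (n + 1)

end Recursion

section Spectrum

variable {d : ℕ} {b c r M : ℝ} {x : ℕ → Fin d → ℝ}

-- One round turns a bound `m` into `mc / (m + c) + r`; by `hcM` this map sends `M` below `M`.
lemma dotProduct_Dmat_succ_mulVec_le (hb : 0 < b) (hbc : b < c)
    (hx : ∀ t, x (t + 1) ⬝ᵥ x (t + 1) ≤ r) (hM : 0 < M) (hbM : b + r ≤ M)
    (hcM : r * (M + c) ≤ M ^ 2) (t : ℕ) (v : Fin d → ℝ) :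
    v ⬝ᵥ Dmat d b c x (t + 1) *ᵥ v ≤ M * (v ⬝ᵥ v) := by
  have hc := hb.trans hbc
  have step {m : ℝ} (hm : m + r ≤ M) (t : ℕ)
      (hA : ∀ v, v ⬝ᵥ parallelSum (Dmat d b c x t) c *ᵥ v ≤ m * (v ⬝ᵥ v)) (v : Fin d → ℝ) :
      v ⬝ᵥ Dmat d b c x (t + 1) *ᵥ v ≤ M * (v ⬝ᵥ v) := by
    have hv : 0 ≤ v ⬝ᵥ v := by simpa using dotProduct_star_self_nonneg v
    exact (dotProduct_add_vecMulVec_mulVec_le hA (hx t) v).trans (mul_le_mul_of_nonneg_right hm hv)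
  induction t generalizing v with
  | zero =>
    refine step hbM 0 (fun v => ?_) v
    rw [parallelSum_Dmat_zero hb hbc, smul_mulVec, one_mulVec, dotProduct_smul, smul_eq_mul]
  | succ t ih =>
    have hfixed : M * c / (M + c) + r ≤ M := by
      rw [← le_sub_iff_add_le, div_le_iff₀ (by positivity)]
      linarith
    exact step hfixed (t + 1)
      (dotProduct_parallelSum_mulVec_le_of_le (posDef_Dmat hb hbc x (t + 1)) hc hM ih) v

lemma sum_trace_Dmat_le (hb : 0 < b) (hbc : b < c)
    (hx : ∀ t, x (t + 1) ⬝ᵥ x (t + 1) ≤ r) (hM : 0 < M) (hbM : b + r ≤ M)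
    (hcM : r * (M + c) ≤ M ^ 2) (n : ℕ) :
    ∑ t ∈ range (n + 1), (Dmat d b c x t).trace ≤ d * (b * c / (c - b)) + n * (d * M) := by
  have hzero : (Dmat d b c x 0).trace = d * (b * c / (c - b)) := by
    simp [Dmat, mul_comm]
  have hsucc (t : ℕ) : (Dmat d b c x (t + 1)).trace ≤ d * M := by
    simpa using trace_le_card_mul (dotProduct_Dmat_succ_mulVec_le hb hbc hx hM hbM hcM t)
  rw [sum_range_succ', hzero, add_comm]
  gcongr
  simpa using sum_le_card_nsmul (range n) _ _ fun t _ => hsucc t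

theorem laserLoss_le_of_mul_add_le_sq (hb : 0 < b) (hbc : b < c)
    (hx : ∀ t, x (t + 1) ⬝ᵥ x (t + 1) ≤ r) {y : ℕ → ℝ} {Y : ℝ} (hy : ∀ t, |y (t + 1)| ≤ Y)
    (hM : 0 < M) (hbM : b + r ≤ M) (hcM : r * (M + c) ≤ M ^ 2) (u : ℕ → Fin d → ℝ) (n : ℕ) :
    laserLoss d b c x y (n + 1) ≤ b * (u 1 ⬝ᵥ u 1)
      + c * ∑ t ∈ range n, (u (t + 2) - u (t + 1)) ⬝ᵥ (u (t + 2) - u (t + 1))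
      + ∑ t ∈ range (n + 1), (y (t + 1) - u (t + 1) ⬝ᵥ x (t + 1)) ^ 2
      + Y ^ 2 * Real.log (b⁻¹ • Dmat d b c x (n + 1)).det
      + b / (c - b) * Y ^ 2 * d + Y ^ 2 * d * M * n / c := by
  have hc := hb.trans hbc
  have htrace : Y ^ 2 * (c⁻¹ * ∑ t ∈ range (n + 1), (Dmat d b c x t).trace)
      ≤ b / (c - b) * Y ^ 2 * d + Y ^ 2 * d * M * n / c := by
    calc _ ≤ Y ^ 2 * (c⁻¹ * (d * (b * c / (c - b)) + n * (d * M))) := by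
          gcongr
          exact sum_trace_Dmat_le hb hbc hx hM hbM hcM n
      _ = _ := by field_simp
  linarith [laserLoss_le_regularizedLoss_add hb hbc x hy u n]

end Spectrum

section Tuning

lemma mul_max_add_le_sq_max {b c r : ℝ} (hb : 0 ≤ b) (hr : 0 < r)
    (hc : c ≤ max (9 / 8 * r) ((b + r) ^ 2 / (8 * r))) :
    r * (max (3 * r) (b + r) + c) ≤ max (3 * r) (b + r) ^ 2 := by
  set M := max (3 * r) (b + r)
  have h3M : 3 * r ≤ M := le_max_left _ _
  have hbM : b + r ≤ M := le_max_right _ _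
  have hcM : r * c ≤ M ^ 2 / 8 := by
    refine (mul_le_mul_of_nonneg_left hc hr.le).trans ?_
    rw [mul_max_of_nonneg _ _ hr.le]
    refine max_le (by nlinarith) ?_
    calc r * ((b + r) ^ 2 / (8 * r)) = (b + r) ^ 2 / 8 := by field_simp
      _ ≤ M ^ 2 / 8 := by gcongr
  nlinarith

lemma sqrt_div_le_of_div_sq_le {K V μ : ℝ} (hV : 0 < V) (hμ : 0 < μ) (h : K / μ ^ 2 ≤ V) :
    √(K / V) ≤ μ := by
  rwa [Real.sqrt_le_left hμ.le, div_le_comm₀ hV (by positivity)]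

lemma sqrt_div_mul_self {K V : ℝ} (hV : 0 ≤ V) : √(K / V) * V = √(K * V) := by
  rw [Real.sqrt_div' _ hV, Real.sqrt_mul' _ hV, div_mul_eq_mul_div, mul_div_assoc, Real.div_sqrt]

lemma div_sqrt_div {K V : ℝ} (hK : 0 ≤ K) : K / √(K / V) = √(K * V) := by
  rw [Real.sqrt_div hK, Real.sqrt_mul hK, div_div_eq_mul_div, mul_div_right_comm, Real.div_sqrt]

end Tuning

end Laser

open Laser in
theorem laser_regret_high_drift (d : ℕ) (hd : 1 ≤ d)
    (x : ℕ → Fin d → ℝ) (y : ℕ → ℝ) (X Y : ℝ) (hX : 0 < X) (hY : 0 < Y)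
    (hx : ∀ t : ℕ, x (t + 1) ⬝ᵥ x (t + 1) ≤ X ^ 2)
    (hy : ∀ t : ℕ, |y (t + 1)| ≤ Y)
    (T : ℕ) (hT : 1 ≤ T) (u : ℕ → Fin d → ℝ) (V : ℝ)
    (hV : V = ∑ t ∈ Finset.range (T - 1),
        (u (t + 2) - u (t + 1)) ⬝ᵥ (u (t + 2) - u (t + 1)))
    (hVpos : 0 < V)
    (ε : ℝ) (hε0 : 0 < ε) (hε1 : ε < 1)
    (b c μ M : ℝ)
    (hc : c = Real.sqrt (Y ^ 2 * d * M * T / V))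
    (hb : b = ε * c)
    (hμ : μ = max ((9 / 8) * X ^ 2) ((b + X ^ 2) ^ 2 / (8 * X ^ 2)))
    (hM : M = max (3 * X ^ 2) (b + X ^ 2))
    (hhigh : V ≥ T * (Y ^ 2 * d * M) / μ ^ 2) :
    laserLoss d b c x y T ≤
      b * (u 1 ⬝ᵥ u 1)
        + 2 * Real.sqrt (Y ^ 2 * d * T * M * V)
        + (ε / (1 - ε)) * Y ^ 2 * d
        + ∑ t ∈ Finset.range T, (y (t + 1) - u (t + 1) ⬝ᵥ x (t + 1)) ^ 2
        + Y ^ 2 * Real.log ((b⁻¹ • Dmat d b c x T).det) := by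
  obtain ⟨n, rfl⟩ := Nat.exists_eq_add_of_le' hT
  have hX2 : 0 < X ^ 2 := by positivity
  have hM0 : 0 < M := hM ▸ lt_max_of_lt_left (by positivity)
  have hK : 0 < Y ^ 2 * d * M * (n + 1 : ℕ) := by positivity
  have hc0 : 0 < c := hc ▸ Real.sqrt_pos.2 (div_pos hK hVpos)
  have hb0 : 0 < b := hb ▸ mul_pos hε0 hc0
  have hbc : b < c := hb ▸ mul_lt_of_lt_one_left hc0 hε1
  have hμ0 : 0 < μ := hμ ▸ lt_max_of_lt_left (by positivity)
  have hcμ : c ≤ μ := hc ▸ sqrt_div_le_of_div_sq_le hVpos hμ0 <| by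
    rwa [mul_comm _ ((n + 1 : ℕ) : ℝ)]
  have regret := laserLoss_le_of_mul_add_le_sq hb0 hbc hx hy hM0 (hM ▸ le_max_right _ _)
    (hM ▸ mul_max_add_le_sq_max hb0.le hX2 (hμ ▸ hcμ)) u n
  have drift_term : c * V = √(Y ^ 2 * d * (n + 1 : ℕ) * M * V) := by
    rw [hc, sqrt_div_mul_self hVpos.le, mul_right_comm _ M]
  have trace_term : Y ^ 2 * d * M * n / c ≤ √(Y ^ 2 * d * (n + 1 : ℕ) * M * V) := by
    rw [mul_right_comm (Y ^ 2 * d : ℝ) _ M, ← div_sqrt_div hK.le, ← hc]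
    gcongr
    exact n.le_succ
  have init_term : b / (c - b) = ε / (1 - ε) := by
    rw [hb, ← one_sub_mul, mul_div_mul_right _ _ hc0.ne']
  rw [Nat.add_sub_cancel] at hV
  rw [← hV, drift_term, init_term] at regret
  linarith
end
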